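/- Apery's constant satisfies ζ(3) = (4π²/35) · (3/2 − log(π/2) + Σ_{n=1}^{∞} ζ(2n) / (n(n+1)(2n+1)·16^n)). -/

import Mathlib

/-!
The identity comes from evaluating in two ways the integral
`I = ∫ θ in 0..π/2, (π/2 - θ) * (-log (2 * sin (θ / 2)))`,
that is, the second iterated integral from `0` of `-log (2 sin (θ/2)) = ∑ cos (k θ) / k`.

* Integrating the Fourier series termwise gives `I = ∑ (1 - cos (k π / 2)) / k³`
  (`tsum_one_sub_cos_div_cube`), which splits by the parity of `k` into `35/32 * ζ(3)`
  (`tsum_one_sub_cos_eq`). Since the Fourier series converges only conditionally, the interchange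
  is made for the factor `r ^ k`, `r < 1`, where the sum is `-log ‖1 - r * exp (i θ)‖`, and `r → 1`
  follows by dominated convergence on both sides.
* Euler's product for the sine gives
  `log θ - log (2 sin (θ/2)) = ∑ ζ(2n) (θ / 2π)^(2n) / n` (`hasSum_log_sub_log_sin`). Integrating this
  power series against `π/2 - θ` produces `π² / 8` times the series of the theorem
  (`hasSum_integral_sub_mul_log_div`), while `∫ (π/2 - θ) log θ` equals
  `π² / 8 * (log (π/2) - 3/2)` (`integral_sub_mul_log`). Hence
  `I = π² / 8 * (3/2 - log (π/2) + ∑ ...)`.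
-/


open Real

/-- Real Riemann zeta values via the series `∑ 1/k^m`. -/
noncomputable def zetaR (m : ℕ) : ℝ := ∑' k : ℕ, 1 / ((k : ℝ) + 1) ^ m

/-- Transport of a `HasSum` along a termwise equality and an equality of the sums. -/
theorem hasSum_of_eq {f g : ℕ → ℝ} {a b : ℝ} (h : HasSum f a) (hf : ∀ k, g k = f k)
    (hb : b = a) : HasSum g b := by
  rw [hb, funext hf]
  exact h

/-! ### Integrals against the kernel `a - θ` -/

/-- The kernel `a - θ` performs two integrations from `0` at once, which turns `cos (k θ) / k` into
`(1 - cos (k a)) / k³`. Both sides vanish at `k = 0`. -/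
theorem integral_sub_mul_cos (a : ℝ) (k : ℕ) :
    ∫ θ in (0 : ℝ)..a, (a - θ) * (cos (k * θ) / k) = (1 - cos (k * a)) / (k : ℝ) ^ 3 := by
  rcases eq_or_ne k 0 with rfl | hk
  · simp
  have hk' : (k : ℝ) ≠ 0 := by exact_mod_cast hk
  rw [intervalIntegral.integral_eq_sub_of_hasDerivAt
    (f := fun θ => (a - θ) * (sin (k * θ) / k ^ 2) - cos (k * θ) / k ^ 3)]
  · simp
    ring
  · intro x _
    have h1 : HasDerivAt (fun θ : ℝ => (k : ℝ) * θ) k x := by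
      simpa using (hasDerivAt_id x).const_mul (k : ℝ)
    have h2 : HasDerivAt (fun θ : ℝ => a - θ) (-1) x := by
      simpa using (hasDerivAt_id x).const_sub a
    refine ((h2.mul (h1.sin.div_const (k ^ 2 : ℝ))).sub
      (h1.cos.div_const (k ^ 3 : ℝ))).congr_deriv ?_
    field_simp
    ring
  · exact Continuous.intervalIntegrable (by fun_prop) _ _

theorem integral_sub_mul_log {a : ℝ} (ha : 0 ≤ a) :
    ∫ θ in (0 : ℝ)..a, (a - θ) * log θ = a ^ 2 / 2 * log a - 3 * a ^ 2 / 4 := by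
  have hint : IntervalIntegrable (fun θ => (a - θ) * log θ) MeasureTheory.volume 0 a :=
    intervalIntegral.intervalIntegrable_log'.continuousOn_mul (by fun_prop)
  rw [intervalIntegral.integral_eq_sub_of_hasDerivAt_of_le
    (f := fun θ => a * (θ * log θ) - a * θ - θ * (θ * log θ) / 2 + θ ^ 2 / 4) ha _ _ hint]
  · simp
    ring
  · have := continuous_mul_log
    fun_prop
  · intro x hx
    have hx0 : x ≠ 0 := hx.1.ne'
    have h1 := hasDerivAt_mul_log hx0
    have h0 := hasDerivAt_id x
    refine ((((h1.const_mul a).sub (h0.const_mul a)).sub ((h0.mul h1).div_const 2)).add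
      ((h0.pow 2).div_const 4)).congr_deriv ?_
    simp
    ring

theorem integral_sub_mul_pow (a : ℝ) (n : ℕ) :
    ∫ θ in (0 : ℝ)..a, (a - θ) * θ ^ n = a ^ (n + 2) / ((n + 1) * (n + 2)) := by
  have h : ∀ θ : ℝ, (a - θ) * θ ^ n = a * θ ^ n - θ ^ (n + 1) := fun θ => by ring
  simp_rw [h]
  rw [intervalIntegral.integral_sub (Continuous.intervalIntegrable (by fun_prop) _ _)
    (Continuous.intervalIntegrable (by fun_prop) _ _), intervalIntegral.integral_const_mul,
    integral_pow, integral_pow]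
  have h1 : (n : ℝ) + 1 ≠ 0 := by positivity
  have h2 : (n : ℝ) + 2 ≠ 0 := by positivity
  push_cast
  simp only [ne_eq, Nat.add_eq_zero_iff, one_ne_zero, and_false, not_false_eq_true, zero_pow,
    sub_zero, add_assoc, one_add_one_eq_two]
  field_simp
  ring

/-! ### The cosine series and its Abel limit -/

/-- Real part of the Taylor series of `-log (1 - z)` at `z = r * exp (i θ)`. -/
theorem hasSum_pow_mul_cos_div {r : ℝ} (hr0 : 0 ≤ r) (hr1 : r < 1) (θ : ℝ) :
    HasSum (fun k : ℕ => r ^ k * (cos (k * θ) / k))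
      (-log ‖(1 : ℂ) - r * Complex.exp (θ * Complex.I)‖) := by
  have hz : ‖(r : ℂ) * Complex.exp (θ * Complex.I)‖ < 1 := by
    rw [norm_mul, Complex.norm_exp_ofReal_mul_I, Complex.norm_real, norm_of_nonneg hr0]
    simpa using hr1
  have h := Complex.hasSum_re (Complex.hasSum_taylorSeries_neg_log hz)
  rw [Complex.neg_re, Complex.log_re] at h
  convert h using 2 with k
  have : ((r : ℂ) * Complex.exp (θ * Complex.I)) ^ k / k
      = ((r ^ k / k : ℝ) : ℂ) * Complex.exp (((k * θ : ℝ) : ℂ) * Complex.I) := by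
    rw [mul_pow, ← Complex.exp_nat_mul]
    push_cast
    rw [mul_assoc (k : ℂ)]
    ring
  rw [this, Complex.re_ofReal_mul, Complex.exp_ofReal_mul_I_re]
  ring

/-- The Abel-regularised cubic cosine series as an integral: for `r < 1` the sum and the integral may
be interchanged, since the terms are dominated by `a * r ^ k`. -/
theorem hasSum_abel {a r : ℝ} (ha : 0 ≤ a) (hr0 : 0 ≤ r) (hr1 : r < 1) :
    HasSum (fun k : ℕ => r ^ k * ((1 - cos (k * a)) / (k : ℝ) ^ 3))
      (∫ θ in (0 : ℝ)..a, (a - θ) * (-log ‖(1 : ℂ) - r * Complex.exp (θ * Complex.I)‖)) := by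
  have hgeo : Summable fun k : ℕ => a * r ^ k :=
    (summable_geometric_of_lt_one hr0 hr1).mul_left a
  have h := intervalIntegral.hasSum_integral_of_dominated_convergence (a := 0) (b := a)
    (μ := MeasureTheory.volume)
    (F := fun (k : ℕ) (θ : ℝ) => (a - θ) * (r ^ k * (cos (k * θ) / k)))
    (f := fun θ => (a - θ) * (-log ‖(1 : ℂ) - r * Complex.exp (θ * Complex.I)‖))
    (fun k _ => a * r ^ k)
    (fun k => (by fun_prop : Continuous _).aestronglyMeasurable)
    (fun k => Filter.Eventually.of_forall fun θ hθ => ?_)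
    (Filter.Eventually.of_forall fun _ _ => hgeo)
    (continuous_const.intervalIntegrable _ _)
    (Filter.Eventually.of_forall fun θ _ => (hasSum_pow_mul_cos_div hr0 hr1 θ).mul_left _)
  · refine hasSum_of_eq h (fun k => ?_) rfl
    rw [← integral_sub_mul_cos, ← intervalIntegral.integral_const_mul]
    congr 1
    ext θ
    ring
  · rw [Set.uIoc_of_le ha] at hθ
    have hc : |cos (k * θ) / k| ≤ 1 := by
      rcases eq_or_ne k 0 with rfl | hk
      · simp
      have : (1 : ℝ) ≤ k := by exact_mod_cast Nat.one_le_iff_ne_zero.mpr hk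
      rw [abs_div, Nat.abs_cast, div_le_one (by linarith)]
      exact (abs_cos_le_one _).trans this
    rw [norm_mul, norm_mul, Real.norm_eq_abs, Real.norm_eq_abs, Real.norm_eq_abs,
      abs_of_nonneg (sub_nonneg.2 hθ.2), abs_of_nonneg (pow_nonneg hr0 k)]
    have := pow_nonneg hr0 k
    gcongr
    · linarith [hθ.1]
    · exact mul_le_of_le_one_right this hc

theorem norm_one_sub_exp {θ : ℝ} (h0 : 0 ≤ θ) (h1 : θ ≤ π) :
    ‖(1 : ℂ) - Complex.exp (θ * Complex.I)‖ = 2 * sin (θ / 2) := by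
  have hs : 0 ≤ sin (θ / 2) := sin_nonneg_of_nonneg_of_le_pi (by linarith) (by linarith)
  rw [← abs_of_nonneg hs, norm_sub_rev]
  have := Complex.norm_exp_I_mul_ofReal_sub_one θ
  rw [mul_comm] at this
  rw [this]
  simp

theorem sin_le_norm_one_sub_mul_exp {r θ : ℝ} :
    sin θ ≤ ‖(1 : ℂ) - r * Complex.exp (θ * Complex.I)‖ := by
  have h : (1 : ℂ) - r * Complex.exp (θ * Complex.I)
      = Complex.exp (θ * Complex.I) * (Complex.exp ((-θ : ℝ) * Complex.I) - r) := by
    rw [mul_sub, ← Complex.exp_add]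
    simp
    ring
  rw [h, norm_mul, Complex.norm_exp_ofReal_mul_I, one_mul]
  refine le_trans ?_ (Complex.abs_im_le_norm _)
  rw [Complex.sub_im, Complex.exp_ofReal_mul_I_im]
  simpa using le_abs_self (sin θ)

/-- A bound uniform in `r`, integrable in `θ` up to the singularity at `0`; it dominates the limit
`r → 1`. -/
theorem abs_log_norm_le {r θ : ℝ} (hr0 : 0 ≤ r) (hr1 : r ≤ 1) (hs : 0 < sin θ) :
    |log ‖(1 : ℂ) - r * Complex.exp (θ * Complex.I)‖| ≤ log 2 - log (sin θ) := by
  have hlow := sin_le_norm_one_sub_mul_exp (r := r) (θ := θ)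
  have hup : ‖(1 : ℂ) - r * Complex.exp (θ * Complex.I)‖ ≤ 2 := by
    refine (norm_sub_le _ _).trans ?_
    rw [norm_mul, Complex.norm_exp_ofReal_mul_I, Complex.norm_real, norm_of_nonneg hr0]
    simp
    linarith
  have h1 := log_le_log hs hlow
  have h2 := log_le_log (hs.trans_le hlow) hup
  have h3 : log (sin θ) ≤ 0 := log_nonpos hs.le (sin_le_one θ)
  have h4 : 0 ≤ log 2 := log_nonneg (by norm_num)
  rw [abs_le]
  constructor <;> linarith

/-- The limit `r → 1⁻` of `hasSum_abel` at `a = π / 2`. The sum converges by domination with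
`2 / k³`, the integral by domination with `π / 2 * (log 2 - log (sin θ))`. -/
theorem tsum_one_sub_cos_div_cube :
    ∑' k : ℕ, (1 - cos (k * (π / 2))) / (k : ℝ) ^ 3
      = ∫ θ in (0 : ℝ)..(π / 2), (π / 2 - θ) * (-log (2 * sin (θ / 2))) := by
  have hpi := pi_pos
  have hev : ∀ᶠ r : ℝ in nhdsWithin 1 (Set.Iio 1), 0 ≤ r ∧ r < 1 := by
    filter_upwards [Ioo_mem_nhdsLT (zero_lt_one' ℝ)] with r hr using ⟨hr.1.le, hr.2⟩
  have hid : Filter.Tendsto (fun r : ℝ => r) (nhdsWithin 1 (Set.Iio 1)) (nhds 1) :=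
    Filter.tendsto_id.mono_left nhdsWithin_le_nhds
  have hL : Filter.Tendsto
      (fun r : ℝ => ∑' k : ℕ, r ^ k * ((1 - cos (k * (π / 2))) / (k : ℝ) ^ 3))
      (nhdsWithin 1 (Set.Iio 1))
      (nhds (∑' k : ℕ, (1 - cos (k * (π / 2))) / (k : ℝ) ^ 3)) := by
    refine tendsto_tsum_of_dominated_convergence (bound := fun k : ℕ => 2 * (1 / (k : ℝ) ^ 3))
      ((Real.summable_one_div_nat_pow.mpr (by norm_num)).mul_left 2) (fun k => ?_) ?_
    · simpa using (hid.pow k).mul_const ((1 - cos (k * (π / 2))) / (k : ℝ) ^ 3)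
    · filter_upwards [hev] with r hr k
      rw [norm_mul, norm_of_nonneg (pow_nonneg hr.1 k), norm_of_nonneg
        (div_nonneg (by linarith [cos_le_one (k * (π / 2))]) (by positivity)), ← mul_one_div]
      refine (mul_le_of_le_one_left ?_ (pow_le_one₀ hr.1 hr.2.le)).trans ?_
      · exact mul_nonneg (by linarith [cos_le_one (k * (π / 2))]) (by positivity)
      · gcongr
        linarith [neg_one_le_cos (k * (π / 2))]
  have hR : Filter.Tendsto
      (fun r : ℝ => ∫ θ in (0 : ℝ)..(π / 2),
        (π / 2 - θ) * (-log ‖(1 : ℂ) - r * Complex.exp (θ * Complex.I)‖))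
      (nhdsWithin 1 (Set.Iio 1))
      (nhds (∫ θ in (0 : ℝ)..(π / 2), (π / 2 - θ) * (-log (2 * sin (θ / 2))))) := by
    refine intervalIntegral.tendsto_integral_filter_of_dominated_convergence
      (fun θ => π / 2 * (log 2 - log (sin θ))) ?_ ?_ ?_ ?_
    · refine Filter.Eventually.of_forall fun r => Measurable.aestronglyMeasurable ?_
      exact (measurable_const.sub measurable_id).mul
        (Real.measurable_log.comp (by fun_prop : Continuous fun θ : ℝ =>
          ‖(1 : ℂ) - r * Complex.exp (θ * Complex.I)‖).measurable).neg
    · filter_upwards [hev] with r hr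
      refine Filter.Eventually.of_forall fun θ hθ => ?_
      rw [Set.uIoc_of_le (by linarith)] at hθ
      rw [norm_mul, norm_neg, Real.norm_eq_abs, Real.norm_eq_abs,
        abs_of_nonneg (sub_nonneg.2 hθ.2)]
      have := abs_log_norm_le hr.1 hr.2.le (sin_pos_of_pos_of_lt_pi hθ.1 (by linarith [hθ.2]))
      gcongr
      linarith [hθ.1]
    · exact (intervalIntegrable_const.sub intervalIntegrable_log_sin).const_mul _
    · refine Filter.Eventually.of_forall fun θ hθ => ?_
      rw [Set.uIoc_of_le (by linarith)] at hθ
      have hs : 0 < sin (θ / 2) := sin_pos_of_pos_of_lt_pi (by linarith [hθ.1])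
        (by linarith [hθ.2])
      have hn := norm_one_sub_exp hθ.1.le (by linarith [hθ.2])
      have ht : Filter.Tendsto (fun r : ℝ => ‖(1 : ℂ) - r * Complex.exp (θ * Complex.I)‖)
          (nhdsWithin 1 (Set.Iio 1)) (nhds (2 * sin (θ / 2))) := by
        have hc : Continuous fun r : ℝ => ‖(1 : ℂ) - r * Complex.exp (θ * Complex.I)‖ := by
          fun_prop
        have := (hc.tendsto 1).comp hid
        simpa [hn, Function.comp_def] using this
      exact ((ht.log (by positivity)).neg).const_mul _
  refine tendsto_nhds_unique hL (hR.congr' ?_)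
  filter_upwards [hev] with r hr using (hasSum_abel (by linarith) hr.1 hr.2).tsum_eq.symm

/-! ### Evaluation of the cosine series at a quarter period -/

theorem summable_zetaR {m : ℕ} (hm : 2 ≤ m) : Summable fun k : ℕ => 1 / ((k : ℝ) + 1) ^ m := by
  have := (summable_nat_add_iff 1).mpr (Real.summable_one_div_nat_pow (p := m).mpr (by omega))
  simpa using this

/-- `1 - cos (k π / 2)` is `1` for odd `k`, `2` for `k ≡ 2 mod 4` and `0` for `4 ∣ k`, so the sum is
`7/8 * ζ(3) + 1/8 * (2 * 7/8 * ζ(3))`. -/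
theorem tsum_one_sub_cos_eq :
    ∑' k : ℕ, (1 - cos (k * (π / 2))) / (k : ℝ) ^ 3 = 35 / 32 * zetaR 3 := by
  have hz : HasSum (fun k : ℕ => 1 / ((k : ℝ)) ^ 3) (zetaR 3) := by
    have h := (summable_zetaR (m := 3) (by norm_num)).hasSum
    have := (hasSum_nat_add_iff (f := fun k : ℕ => 1 / ((k : ℝ)) ^ 3) (g := zetaR 3) 1).mp
      (by simpa [zetaR] using h)
    simpa using this
  have hs := hz.summable
  have hodd : HasSum (fun k : ℕ => 1 / (2 * (k : ℝ) + 1) ^ 3) (7 / 8 * zetaR 3) := by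
    have hso : Summable (fun k : ℕ => 1 / (2 * (k : ℝ) + 1) ^ 3) := by
      have := hs.comp_injective (i := fun k : ℕ => 2 * k + 1) (fun a b h => by simpa using h)
      simpa [Function.comp_def] using this
    have he : HasSum (fun k : ℕ => 1 / (((2 * k : ℕ) : ℝ)) ^ 3) (1 / 8 * zetaR 3) := by
      refine hasSum_of_eq (hz.mul_left (1 / 8)) (fun k => ?_) rfl
      push_cast
      rw [mul_pow]
      ring
    have ho : HasSum (fun k : ℕ => 1 / (((2 * k + 1 : ℕ) : ℝ)) ^ 3)
        (∑' k : ℕ, 1 / (2 * (k : ℝ) + 1) ^ 3) := by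
      simpa using hso.hasSum
    have := hz.unique (HasSum.even_add_odd (f := fun k : ℕ => 1 / ((k : ℝ)) ^ 3) he ho)
    have h2 : ∑' k : ℕ, 1 / (2 * (k : ℝ) + 1) ^ 3 = 7 / 8 * zetaR 3 := by linarith
    exact h2 ▸ hso.hasSum
  have halt : HasSum (fun k : ℕ => (1 - cos (k * π)) / (k : ℝ) ^ 3) (7 / 4 * zetaR 3) := by
    have := HasSum.even_add_odd (f := fun k : ℕ => (1 - cos (k * π)) / (k : ℝ) ^ 3)
      (m := 0) (m' := 7 / 4 * zetaR 3) ?_ ?_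
    · simpa using this
    · refine hasSum_of_eq hasSum_zero (fun k => ?_) rfl
      have : cos (((2 * k : ℕ) : ℝ) * π) = 1 := by
        rw [cos_nat_mul_pi]; simp
      rw [this, sub_self, zero_div]
    · refine hasSum_of_eq (hodd.mul_left 2) (fun k => ?_) ?_
      · have : cos (((2 * k + 1 : ℕ) : ℝ) * π) = -1 := by
          rw [cos_nat_mul_pi, pow_succ]; simp
        rw [this]
        push_cast
        ring
      · ring
  refine HasSum.tsum_eq ?_
  have := HasSum.even_add_odd (f := fun k : ℕ => (1 - cos (k * (π / 2))) / (k : ℝ) ^ 3)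
    (m := 7 / 32 * zetaR 3) (m' := 7 / 8 * zetaR 3) ?_ ?_
  · convert this using 1
    ring
  · refine hasSum_of_eq (halt.mul_left (1 / 8)) (fun k => ?_) ?_
    · have : ((2 * k : ℕ) : ℝ) * (π / 2) = k * π := by push_cast; ring
      rw [this]
      push_cast
      rw [mul_pow]
      ring
    · ring
  · refine hasSum_of_eq hodd (fun k => ?_) rfl
    have : cos (((2 * k + 1 : ℕ) : ℝ) * (π / 2)) = 0 := by
      rw [cos_eq_zero_iff]
      exact ⟨k, by push_cast; ring⟩
    rw [this]
    push_cast
    ring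

/-! ### The expansion of `log (sin x / x)` in even zeta values -/

/-- Logarithm of Euler's product for the sine, with each factor `log (1 - t² / j²)` expanded into
powers of `t²` and the absolutely convergent double series summed over `j` first. The restriction
`t ≤ 1 / 4` covers the range needed here and gives a geometric majorant of ratio `1 / 16`. -/
theorem hasSum_log_sub_log_sin {t : ℝ} (h0 : 0 < t) (h1 : t ≤ 1 / 4) :
    HasSum (fun n : ℕ => zetaR (2 * (n + 1)) * t ^ (2 * (n + 1)) / ((n : ℝ) + 1))
      (log (π * t) - log (sin (π * t))) := by
  have hpi := pi_pos
  have hx : ∀ j : ℕ, t ^ 2 / ((j : ℝ) + 1) ^ 2 ≤ 1 / 16 := fun j => by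
    rw [div_le_iff₀ (by positivity)]
    have : (0 : ℝ) ≤ j := by positivity
    nlinarith
  have hxp : ∀ j : ℕ, 0 < t ^ 2 / ((j : ℝ) + 1) ^ 2 := fun j => by positivity
  obtain ⟨F, hF⟩ : ∃ F : ℕ × ℕ → ℝ,
      ∀ p, F p = (t ^ 2 / ((p.1 : ℝ) + 1) ^ 2) ^ (p.2 + 1) / ((p.2 : ℝ) + 1) := ⟨_, fun _ => rfl⟩
  have hFs : Summable F := by
    have hb := (summable_zetaR (m := 2) le_rfl).mul_of_nonneg
      (summable_geometric_of_lt_one (r := (1 / 16 : ℝ)) (by norm_num) (by norm_num))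
      (fun k => by positivity) (fun k => by positivity)
    refine Summable.of_nonneg_of_le (fun p => by rw [hF]; positivity) (fun p => ?_) hb
    have hle : t ^ 2 / ((p.1 : ℝ) + 1) ^ 2 ≤ 1 / ((p.1 : ℝ) + 1) ^ 2 := by
      gcongr
      nlinarith
    calc F p ≤ (t ^ 2 / ((p.1 : ℝ) + 1) ^ 2) ^ (p.2 + 1) := by
          rw [hF]
          exact div_le_self (pow_nonneg (hxp p.1).le _)
            (by linarith [(Nat.cast_nonneg p.2 : (0 : ℝ) ≤ p.2)])
      _ = (t ^ 2 / ((p.1 : ℝ) + 1) ^ 2) * (t ^ 2 / ((p.1 : ℝ) + 1) ^ 2) ^ p.2 := pow_succ' _ _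
      _ ≤ 1 / ((p.1 : ℝ) + 1) ^ 2 * (1 / 16) ^ p.2 := by
          exact mul_le_mul hle (pow_le_pow_left₀ (hxp p.1).le (hx p.1) _)
            (pow_nonneg (hxp p.1).le _) (by positivity)
  have hfib : ∀ j : ℕ, HasSum (fun n => F (j, n)) (-log (1 - t ^ 2 / ((j : ℝ) + 1) ^ 2)) :=
    fun j => hasSum_of_eq (hasSum_pow_div_log_of_abs_lt_one (by
      rw [abs_of_pos (hxp j)]
      linarith [hx j])) (fun n => hF (j, n)) rfl
  have hsum1 : HasSum (fun j : ℕ => -log (1 - t ^ 2 / ((j : ℝ) + 1) ^ 2)) (∑' p, F p) :=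
    hFs.hasSum.prod_fiberwise hfib
  have hval : ∑' p, F p = log (π * t) - log (sin (π * t)) := by
    have hsin : 0 < sin (π * t) := sin_pos_of_pos_of_lt_pi (by positivity) (by nlinarith)
    have ht := (tendsto_euler_sin_prod t).log hsin.ne'
    have ht2 : Filter.Tendsto (fun n => log (π * t) -
        log (π * t * ∏ j ∈ Finset.range n, (1 - t ^ 2 / ((j : ℝ) + 1) ^ 2))) Filter.atTop
        (nhds (log (π * t) - log (sin (π * t)))) := ht.const_sub _
    refine tendsto_nhds_unique hsum1.tendsto_sum_nat (ht2.congr fun n => ?_)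
    have hne : ∀ j ∈ Finset.range n, (1 - t ^ 2 / ((j : ℝ) + 1) ^ 2) ≠ 0 := fun j _ => by
      linarith [hx j]
    rw [log_mul (by positivity) (Finset.prod_ne_zero_iff.mpr hne), log_prod hne,
      Finset.sum_neg_distrib]
    ring
  rw [← hval]
  -- The same double series, with the exponent index now first.
  have hswap : HasSum (fun p : ℕ × ℕ => F p.swap) (∑' p, F p) :=
    (Equiv.prodComm ℕ ℕ).hasSum_iff.mpr hFs.hasSum
  refine hswap.prod_fiberwise fun n => ?_
  have := ((summable_zetaR (m := 2 * (n + 1)) (by omega)).hasSum).mul_right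
    (t ^ (2 * (n + 1)) / ((n : ℝ) + 1))
  refine hasSum_of_eq this (fun k => ?_) ?_
  · simp only [hF, Prod.swap]
    rw [div_pow, ← pow_mul, ← pow_mul]
    ring
  · rw [zetaR]
    ring

theorem zetaR_nonneg (m : ℕ) : 0 ≤ zetaR m := tsum_nonneg fun k => by positivity

/-- Termwise integration of the expansion of `log θ - log (2 * sin (θ / 2))`, obtained from
`hasSum_log_sub_log_sin` at `t = θ / (2 π)`. -/
theorem hasSum_integral_sub_mul_log_div :
    HasSum (fun n : ℕ => π ^ 2 / 8 * (zetaR (2 * (n + 1)) /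
          (((n : ℝ) + 1) * ((n : ℝ) + 2) * (2 * ((n : ℝ) + 1) + 1) * 16 ^ (n + 1))))
      (∫ θ in (0 : ℝ)..(π / 2), (π / 2 - θ) * (log θ - log (2 * sin (θ / 2)))) := by
  have hpi := pi_pos
  have hlog : ∀ θ : ℝ, 0 < θ → θ ≤ π / 2 →
      HasSum (fun n : ℕ => zetaR (2 * (n + 1)) * (θ / (2 * π)) ^ (2 * (n + 1)) / ((n : ℝ) + 1))
        (log θ - log (2 * sin (θ / 2))) := by
    intro θ h0 h1
    have h := hasSum_log_sub_log_sin (t := θ / (2 * π)) (by positivity) (by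
      rw [div_le_iff₀ (by positivity)]; linarith)
    have e : π * (θ / (2 * π)) = θ / 2 := by field_simp
    have hs : 0 < sin (θ / 2) := sin_pos_of_pos_of_lt_pi (by linarith) (by linarith)
    rw [e, log_div h0.ne' two_ne_zero] at h
    rw [log_mul two_ne_zero hs.ne']
    convert h using 1
    ring
  -- On `[0, π / 2]` each power is largest at the endpoint, and there the series converges.
  have hend := (hlog (π / 2) (by positivity) le_rfl).summable.mul_left (π / 2)
  have h := intervalIntegral.hasSum_integral_of_dominated_convergence (a := 0) (b := π / 2)
    (μ := MeasureTheory.volume)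
    (F := fun (n : ℕ) (θ : ℝ) => (π / 2 - θ) *
      (zetaR (2 * (n + 1)) * (θ / (2 * π)) ^ (2 * (n + 1)) / ((n : ℝ) + 1)))
    (f := fun θ => (π / 2 - θ) * (log θ - log (2 * sin (θ / 2))))
    (fun n _ => π / 2 *
      (zetaR (2 * (n + 1)) * (π / 2 / (2 * π)) ^ (2 * (n + 1)) / ((n : ℝ) + 1)))
    (fun k => (by fun_prop : Continuous _).aestronglyMeasurable)
    (fun k => Filter.Eventually.of_forall fun θ hθ => ?_)
    (Filter.Eventually.of_forall fun _ _ => hend)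
    (continuous_const.intervalIntegrable _ _)
    (Filter.Eventually.of_forall fun θ hθ => ?_)
  · refine hasSum_of_eq h (fun n => ?_) rfl
    have e : ∀ θ : ℝ, (π / 2 - θ) *
        (zetaR (2 * (n + 1)) * (θ / (2 * π)) ^ (2 * (n + 1)) / ((n : ℝ) + 1))
        = zetaR (2 * (n + 1)) / ((2 * π) ^ (2 * (n + 1)) * ((n : ℝ) + 1)) *
          ((π / 2 - θ) * θ ^ (2 * (n + 1))) := fun θ => by
      rw [div_pow]
      field_simp
    simp_rw [e]
    rw [intervalIntegral.integral_const_mul, integral_sub_mul_pow]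
    -- `16 = (2 π / (π / 2)) ^ 2` compares the endpoint with the period.
    have h16 : (π / 2) ^ (2 * (n + 1) + 2) * 16 ^ (n + 1)
        = π ^ 2 / 4 * (2 * π) ^ (2 * (n + 1)) := by
      have : (16 : ℝ) = 4 ^ 2 := by norm_num
      rw [this, ← pow_mul, pow_add, mul_right_comm, ← mul_pow]
      ring
    have h16' : (π / 2) ^ (2 * (n + 1) + 2)
        = π ^ 2 / 4 * (2 * π) ^ (2 * (n + 1)) / 16 ^ (n + 1) := by
      rw [← h16]; field_simp
    rw [h16']
    push_cast
    have : (2 : ℝ) * (n + 1) + 2 = 2 * (n + 2) := by ring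
    rw [this]
    field_simp
    ring
  · rw [Set.uIoc_of_le (by linarith)] at hθ
    have hz := zetaR_nonneg (2 * (k + 1))
    have h0 := hθ.1
    rw [norm_mul, Real.norm_eq_abs, Real.norm_eq_abs, abs_of_nonneg (sub_nonneg.2 hθ.2),
      abs_of_nonneg (by positivity)]
    gcongr
    · linarith
    · exact hθ.2
  · rw [Set.uIoc_of_le (by linarith)] at hθ
    exact (hlog θ hθ.1 hθ.2).mul_left _

theorem zeta_three_repr :
    zetaR 3 = (4 * π ^ 2 / 35) *
      (3 / 2 - Real.log (π / 2) +
        ∑' n : ℕ, zetaR (2 * (n + 1)) /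
          (((n : ℝ) + 1) * ((n : ℝ) + 2) * (2 * ((n : ℝ) + 1) + 1) * 16 ^ (n + 1))) := by
  have h1 := tsum_one_sub_cos_eq
  rw [tsum_one_sub_cos_div_cube] at h1
  have h2 := hasSum_integral_sub_mul_log_div.tsum_eq
  rw [tsum_mul_left] at h2
  have hlog : IntervalIntegrable (fun θ => (π / 2 - θ) * log θ) MeasureTheory.volume 0 (π / 2) :=
    intervalIntegral.intervalIntegrable_log'.continuousOn_mul (by fun_prop)
  have hsin : IntervalIntegrable (fun θ => (π / 2 - θ) * (-log (2 * sin (θ / 2))))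
      MeasureTheory.volume 0 (π / 2) := by
    refine IntervalIntegrable.continuousOn_mul (IntervalIntegrable.neg ?_) (by fun_prop)
    refine MeromorphicOn.intervalIntegrable_log (f := fun θ => 2 * sin (θ / 2)) ?_
    intro θ _
    exact AnalyticAt.meromorphicAt (by fun_prop)
  have h3 : ∀ θ : ℝ, (π / 2 - θ) * (log θ - log (2 * sin (θ / 2)))
      = (π / 2 - θ) * log θ + (π / 2 - θ) * (-log (2 * sin (θ / 2))) := fun θ => by ring
  simp_rw [h3] at h2
  rw [intervalIntegral.integral_add hlog hsin, h1,
    integral_sub_mul_log (by positivity)] at h2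
  linear_combination (-32 / 35 : ℝ) * h2
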